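/- With notation as in the divided-derivative formula δ_l(f^n) = f^{n−l} Σ_a C(a) Π_j δ_j(f)^{a_j}, the sum of the coefficients satisfies Σ_a C(a) ≤ binom(n+l−1, l) ≤ 2^{n+l}. -/

import Mathlib

/-- Divided derivative `δ_l = (1/l!)(d/dt)^l` associated to a derivation. -/
noncomputable def dividedDeriv {K : Type*} [Field K] [Algebra ℚ K]
    (d : Derivation ℚ K K) (l : ℕ) (f : K) : K :=
  (l.factorial : K)⁻¹ * (⇑d)^[l] f

open Finset in
theorem aux_leib {K : Type*} [Field K] [Algebra ℚ K] (d : Derivation ℚ K K) (f g : K) (n : ℕ) :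
    (⇑d)^[n] (f * g) = ∑ ij ∈ antidiagonal n,
      n.choose ij.1 • ((⇑d)^[ij.1] f * (⇑d)^[ij.2] g) := by
  induction n with
  | zero => simp
  | succ n ih =>
    rw [sum_antidiagonal_choose_succ_nsmul (M := K) (fun i j => (⇑d)^[i] f * (⇑d)^[j] g) n,
      Function.iterate_succ_apply', ih, map_sum, ← sum_add_distrib]
    refine sum_congr rfl fun ij hij => ?_
    have hs : n.choose ij.2 = n.choose ij.1 := by
      rw [HasAntidiagonal.mem_antidiagonal] at hij
      exact Nat.choose_symm_of_eq_add (by omega)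
    rw [map_nsmul]
    simp only [Derivation.leibniz, Function.iterate_succ_apply', smul_eq_mul,
      nsmul_eq_mul]
    try rw [hs]
    ring

theorem aux_mul {K : Type*} [Field K] [Algebra ℚ K] (d : Derivation ℚ K K) (f g : K) :
    PowerSeries.mk (fun l => dividedDeriv d l (f * g)) =
      PowerSeries.mk (fun l => dividedDeriv d l f) *
      PowerSeries.mk (fun l => dividedDeriv d l g) := by
  have : CharZero K := algebraRat.charZero K
  ext n
  rw [PowerSeries.coeff_mul]
  simp only [PowerSeries.coeff_mk, dividedDeriv]
  rw [aux_leib, Finset.mul_sum]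
  refine Finset.sum_congr rfl fun ij hij => ?_
  rw [Finset.HasAntidiagonal.mem_antidiagonal] at hij
  subst hij
  have h := Nat.add_choose_mul_factorial_mul_factorial ij.1 ij.2
  rw [← Nat.choose_symm_add] at h
  have h' : (((ij.1 + ij.2).choose ij.1 : ℕ) : K) * (ij.1.factorial : K) * (ij.2.factorial : K)
    = ((ij.1 + ij.2).factorial : K) := by exact_mod_cast h
  have h1 : (ij.1.factorial : K) ≠ 0 := by exact_mod_cast ij.1.factorial_ne_zero
  have h2 : (ij.2.factorial : K) ≠ 0 := by exact_mod_cast ij.2.factorial_ne_zero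
  have h3 : ((ij.1 + ij.2).factorial : K) ≠ 0 := by
    exact_mod_cast (ij.1 + ij.2).factorial_ne_zero
  rw [nsmul_eq_mul]
  field_simp
  rw [← h']
  ring

theorem aux_one {K : Type*} [Field K] [Algebra ℚ K] (d : Derivation ℚ K K) :
    PowerSeries.mk (fun l => dividedDeriv d l (1 : K)) = 1 := by
  ext n
  rw [PowerSeries.coeff_mk, PowerSeries.coeff_one]
  cases n with
  | zero => simp [dividedDeriv]
  | succ n =>
    have : (⇑d)^[n] (0 : K) = 0 := Function.iterate_fixed (map_zero d) n
    simp [dividedDeriv, Function.iterate_succ_apply, this]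

theorem aux_pow {K : Type*} [Field K] [Algebra ℚ K] (d : Derivation ℚ K K) (f : K) (n : ℕ) :
    PowerSeries.mk (fun l => dividedDeriv d l (f ^ n)) =
      PowerSeries.mk (fun l => dividedDeriv d l f) ^ n := by
  induction n with
  | zero => simpa using aux_one d
  | succ n ih => rw [pow_succ, aux_mul, ih, pow_succ]

open Finset in
theorem aux_card (n l : ℕ) (h : l ≤ n) :
    (finsuppAntidiag (range n) l).card = (n + l - 1).choose l := by
  cases n with
  | zero =>
    obtain rfl : l = 0 := by omega
    simp
  | succ m =>
    have h1 := PowerSeries.coeff_pow (m + 1) l (PowerSeries.mk 1 : PowerSeries ℤ)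
    rw [PowerSeries.mk_one_pow_eq_mk_choose_add] at h1
    simp only [PowerSeries.coeff_mk, Pi.one_apply, prod_const_one, sum_const, nsmul_eq_mul,
      mul_one] at h1
    have h2 : (m + l).choose m = (finsuppAntidiag (range (m + 1)) l).card := by exact_mod_cast h1
    rw [← h2, show m + 1 + l - 1 = m + l by omega]
    exact Nat.choose_symm_of_eq_add rfl

/-- number of indices with value `j` -/
def auxCnt (n : ℕ) (k : ℕ →₀ ℕ) (j : ℕ) : ℕ := ((Finset.range n).filter (fun i => k i = j)).card

/-- the exponent tuple -/
def auxProf (l n : ℕ) (k : ℕ →₀ ℕ) (j : Fin (l + 1)) : ℕ :=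
  auxCnt n k j - if (j : ℕ) = 0 then n - l else 0

open Finset in
theorem aux_prod {M : Type*} [CommMonoid M] (l n : ℕ) (k : ℕ →₀ ℕ)
    (hk : k ∈ finsuppAntidiag (range n) l) (x : ℕ → M) :
    ∏ j : Fin (l + 1), x j ^ auxCnt n k j = ∏ i ∈ range n, x (k i) := by
  rw [mem_finsuppAntidiag] at hk
  rw [Fin.prod_univ_eq_prod_range (fun j => x j ^ auxCnt n k j)]
  rw [← prod_fiberwise_of_maps_to (s := range n) (t := range (l + 1)) (g := fun i => k i)]
  · refine prod_congr rfl fun j _ => ?_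
    rw [auxCnt, ← prod_const]
    refine prod_congr rfl fun i hi => ?_
    rw [(mem_filter.1 hi).2]
  · intro i hi
    have := single_le_sum (f := fun i => k i) (fun _ _ => Nat.zero_le _) hi
    have h1 := hk.1
    rw [h1] at this
    exact mem_range.2 (Nat.lt_succ_of_le this)

open Finset in
theorem aux_zero (l n : ℕ) (k : ℕ →₀ ℕ)
    (hk : k ∈ finsuppAntidiag (range n) l) : n - l ≤ auxCnt n k 0 := by
  rw [mem_finsuppAntidiag] at hk
  have h := card_filter_add_card_filter_not (s := range n) (fun i => k i = 0)
  rw [card_range] at h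
  have h2 : ((range n).filter (fun i => ¬ k i = 0)).card ≤ l := by
    rw [← hk.1, card_filter]
    refine sum_le_sum fun i _ => ?_
    split_ifs <;> omega
  unfold auxCnt
  omega

open Finset in
theorem aux_split (l n : ℕ) (k : ℕ →₀ ℕ)
    (hk : k ∈ finsuppAntidiag (range n) l) (j : Fin (l + 1)) :
    auxCnt n k j = auxProf l n k j + if j = 0 then n - l else 0 := by
  have h0 := aux_zero l n k hk
  unfold auxProf
  by_cases hj : j = 0
  · subst hj
    simp
    omega
  · have : (j : ℕ) ≠ 0 := fun h => hj (Fin.ext h)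
    simp [hj]

open Finset in
theorem aux_fact {K : Type*} [CommSemiring K] (l n : ℕ) (k : ℕ →₀ ℕ)
    (hk : k ∈ finsuppAntidiag (range n) l) (x : ℕ → K) :
    ∏ i ∈ range n, x (k i) = x 0 ^ (n - l) * ∏ j : Fin (l + 1), x j ^ auxProf l n k j := by
  rw [← aux_prod l n k hk]
  have : ∀ j : Fin (l + 1), x j ^ auxCnt n k j =
      x j ^ auxProf l n k j * (if j = 0 then x j ^ (n - l) else 1) := by
    intro j
    rw [aux_split l n k hk j, pow_add]
    split_ifs <;> simp
  simp only [this, prod_mul_distrib]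
  rw [prod_ite_eq' univ (0 : Fin (l + 1))]
  simp [mul_comm]

open Finset in
theorem aux_sums (l n : ℕ) (hln : l ≤ n) (k : ℕ →₀ ℕ)
    (hk : k ∈ finsuppAntidiag (range n) l) :
    (∑ j, auxProf l n k j = l) ∧ (∑ j : Fin (l + 1), (j : ℕ) * auxProf l n k j = l) := by
  have hs := aux_split l n k hk
  have key : ∀ y : ℕ → ℕ, ∑ j : Fin (l + 1), y j * auxCnt n k j = ∑ i ∈ range n, y (k i) := by
    intro y
    have := aux_prod l n k hk (fun j => Multiplicative.ofAdd (y j))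
    simp only [← ofAdd_nsmul, ← ofAdd_sum] at this
    have := Multiplicative.ofAdd.injective this
    simpa [mul_comm] using this
  have k1 := key (fun _ => 1)
  have k2 := key (fun j => j)
  have hk' := (mem_finsuppAntidiag.1 hk).1
  simp only [hs, mul_add, sum_add_distrib] at k1 k2
  constructor
  · simp at k1
    omega
  · rw [hk'] at k2
    simpa using k2

theorem stmt9 {K : Type*} [Field K] [Algebra ℚ K] (d : Derivation ℚ K K)
    (l n : ℕ) (hln : l ≤ n) :
    ∃ (A : Finset (Fin (l + 1) → ℕ)) (C : (Fin (l + 1) → ℕ) → ℕ),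
      (∀ a ∈ A, (∑ j, a j = l) ∧ (∑ j : Fin (l + 1), (j : ℕ) * a j = l)) ∧
      (∀ f : K, dividedDeriv d l (f ^ n) =
        f ^ (n - l) * ∑ a ∈ A, (C a : K) *
          ∏ j : Fin (l + 1), (dividedDeriv d (j : ℕ) f) ^ (a j)) ∧
      (∑ a ∈ A, C a) ≤ (n + l - 1).choose l ∧
      (n + l - 1).choose l ≤ 2 ^ (n + l) := by
  classical
  refine ⟨(Finset.finsuppAntidiag (Finset.range n) l).image (auxProf l n),
    fun a => ((Finset.finsuppAntidiag (Finset.range n) l).filter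
      (fun k => auxProf l n k = a)).card, ?_, ?_, ?_, ?_⟩
  · intro a ha
    obtain ⟨k, hk, rfl⟩ := Finset.mem_image.1 ha
    exact aux_sums l n hln k hk
  · intro f
    have h := congrArg (PowerSeries.coeff l) (aux_pow d f n)
    rw [PowerSeries.coeff_pow] at h
    simp only [PowerSeries.coeff_mk] at h
    rw [h, Finset.sum_congr rfl (fun k hk => aux_fact l n k hk (fun j => dividedDeriv d j f)),
      ← Finset.mul_sum]
    congr 1
    · simp [dividedDeriv]
    · rw [← Finset.sum_fiberwise_of_maps_to (g := auxProf l n)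
        (fun k hk => Finset.mem_image_of_mem _ hk)]
      refine Finset.sum_congr rfl fun a _ => ?_
      rw [← nsmul_eq_mul, ← Finset.sum_const]
      refine Finset.sum_congr rfl fun k hk => ?_
      rw [(Finset.mem_filter.1 hk).2]
  · rw [← aux_card n l hln, ← Finset.card_eq_sum_card_image]
  · exact (Nat.choose_le_two_pow _ _).trans (Nat.pow_le_pow_right (by norm_num) (by omega))
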